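/- Let n ≥ 6 and let k be an integer with 4 ≤ k ≤ n−1. Then on the open set {x ∈ ℝ^{n−1} : ξ₃(x₁,x₂,x₃) ≠ 0}, the smooth function G_k(x) = ξ_k(x₁, …, x_k)² / ξ₃(x₁,x₂,x₃)^{k−1} satisfies all three identities: (i) Σ_{m=2}^{n−1} x_{m−1} · ∂G_k/∂x_m = 0; (ii) Σ_{j=1}^{n−1} x_j · ∂G_k/∂x_j = 0; (iii) Σ_{j=1}^{n−1} (n−j−1) x_j · ∂G_k/∂x_j = 0. (Hence the functions ξ_k²/ξ₃^{k−1}, k = 4, …, n−1, form a complete set of invariants of the coadjoint representation of the (n+2)-dimensional solvable Lie algebra s_{4,n+2}, and also of the algebra s_{1,n+1}^{1,2−n}.) -/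

import Mathlib

/-!
Each of the three sums is the derivative of `G_k` at `x` in one direction `v`: the shift
`v_m = x_{m-1}` for (i), and a weighted scaling `v_j = (a - b (j - 1)) x_j` for (ii) (`a = 1`,
`b = 0`) and (iii) (`a = n - 2`, `b = 1`).

* Along the shift, the derivative of `ξ_k` is a telescoping sum equal to `0`
  (`hasDerivAt_xi_shift`).
* Every monomial of `ξ_k` has degree `k - 1` and total `0`-based index weight `k - 1`, so along the
  scaling the derivative of `ξ_k` is `(k - 1) (a - b) ξ_k` (`hasDerivAt_xi_scale`).

So in all cases `D ξ_k = (k - 1) c ξ_k` with `c` independent of `k`. Hence `ξ_k²` and `ξ₃^{k-1}` are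
both eigenvectors of `D` with eigenvalue `2 (k - 1) c`, and their quotient is annihilated by `D`
(`fderiv_G_eq_zero`).
-/

/-- The real function `ξ_k(x_1, …, x_k) = Σ_{j=1}^{k} ((−1)^{k−j}/(k−j)!) x_1^{j−2} x_2^{k−j} x_j`
(with the `j = 1` term interpreted as `((−1)^{k−1}/(k−1)!) x_2^{k−1}`), where the argument
`x : ℕ → ℝ` is coded `0`-based: `x 0 = x_1`, `x 1 = x_2`, …, `x (j-1) = x_j`. -/
noncomputable def xiFun (k : ℕ) (x : ℕ → ℝ) : ℝ :=
  (-1 : ℝ) ^ (k - 1) / (Nat.factorial (k - 1) : ℝ) * (x 1) ^ (k - 1)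
    + ∑ j ∈ Finset.Icc 2 k,
        (-1 : ℝ) ^ (k - j) / (Nat.factorial (k - j) : ℝ)
          * (x 0) ^ (j - 2) * (x 1) ^ (k - j) * x (j - 1)

/-- Extension of a finite tuple of coordinates by zero. -/
def extFun {n : ℕ} (x : Fin n → ℝ) : ℕ → ℝ := fun i => if h : i < n then x ⟨i, h⟩ else 0

/-- The function `G_k(x) = ξ_k(x₁, …, x_k)² / ξ₃(x₁, x₂, x₃)^{k−1}` on `ℝ^{n−1}`. -/
noncomputable def Gfun (n k : ℕ) (y : Fin (n - 1) → ℝ) : ℝ :=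
  (xiFun k (extFun y)) ^ 2 / (xiFun 3 (extFun y)) ^ (k - 1)

/-- `ξ_{K+2}` as a sum over `range`, which avoids truncated subtraction in the exponent of `x₁`. -/
lemma xiFun_add_two (K : ℕ) (x : ℕ → ℝ) :
    xiFun (K + 2) x = (-1 : ℝ) ^ (K + 1) / (Nat.factorial (K + 1) : ℝ) * (x 1) ^ (K + 1)
      + ∑ i ∈ Finset.range (K + 1), (-1 : ℝ) ^ (K - i) / (Nat.factorial (K - i) : ℝ)
          * (x 0) ^ i * (x 1) ^ (K - i) * x (i + 1) := by
  unfold xiFun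
  congr 1
  rw [← Finset.Ico_add_one_right_eq_Icc, Finset.sum_Ico_eq_sum_range]
  refine Finset.sum_congr (by congr 1) fun i _ => ?_
  rw [show K + 2 - (2 + i) = K - i by omega, show 2 + i - 2 = i by omega,
    show 2 + i - 1 = i + 1 by omega]

/-- The product-rule formula for the derivative of `ξ_{K+2}` along a curve `u` with velocity `w`. -/
lemma hasDerivAt_xi (K : ℕ) (u : ℝ → ℕ → ℝ) (w : ℕ → ℝ) (t : ℝ)
    (hu : ∀ i, HasDerivAt (fun s => u s i) (w i) t) :
    HasDerivAt (fun s => xiFun (K + 2) (u s))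
      ((-1 : ℝ) ^ (K + 1) / (Nat.factorial (K + 1) : ℝ) * (((K : ℝ) + 1) * (u t 1) ^ K * w 1)
      + ∑ i ∈ Finset.range (K + 1), (-1 : ℝ) ^ (K - i) / (Nat.factorial (K - i) : ℝ)
          * ((i * (u t 0) ^ (i - 1) * w 0) * (u t 1) ^ (K - i) * u t (i + 1)
            + (u t 0) ^ i * (((K - i : ℕ) : ℝ) * (u t 1) ^ (K - i - 1) * w 1) * u t (i + 1)
            + (u t 0) ^ i * (u t 1) ^ (K - i) * w (i + 1))) t := by
  simp only [xiFun_add_two]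
  refine HasDerivAt.add ?_ (HasDerivAt.fun_sum fun i _ => ?_)
  · have h := ((hu 1).fun_pow (K + 1)).const_mul
      ((-1 : ℝ) ^ (K + 1) / (Nat.factorial (K + 1) : ℝ))
    simpa using h
  · have h := (((((hu 0).fun_pow i).const_mul
      ((-1 : ℝ) ^ (K - i) / (Nat.factorial (K - i) : ℝ))).fun_mul
        ((hu 1).fun_pow (K - i))).fun_mul (hu (i + 1)))
    refine h.congr_deriv ?_
    ring

lemma hasDerivAt_xi_shift (K : ℕ) (u : ℝ → ℕ → ℝ) (w : ℕ → ℝ) (t : ℝ)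
    (hu : ∀ i, HasDerivAt (fun s => u s i) (w i) t)
    (h0 : w 0 = 0) (hs : ∀ i, i < K + 1 → w (i + 1) = u t i) :
    HasDerivAt (fun s => xiFun (K + 2) (u s)) 0 t := by
  refine (hasDerivAt_xi K u w t hu).congr_deriv ?_
  -- The summand with index `i` is `F (i + 1) - F i`; moreover `F (K + 1) = 0`, and `F 0` is the
  -- derivative of the term of `ξ_{K+2}` outside the sum.
  set F : ℕ → ℝ := fun i => (-1 : ℝ) ^ (K + 1 - i) / (Nat.factorial (K + 1 - i) : ℝ)
    * ((K + 1 - i : ℕ) : ℝ) * (u t 0) ^ i * (u t 1) ^ (K - i) * u t i with hF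
  have hsum : ∀ i ∈ Finset.range (K + 1),
      (-1 : ℝ) ^ (K - i) / (Nat.factorial (K - i) : ℝ)
          * ((i * (u t 0) ^ (i - 1) * w 0) * (u t 1) ^ (K - i) * u t (i + 1)
            + (u t 0) ^ i * (((K - i : ℕ) : ℝ) * (u t 1) ^ (K - i - 1) * w 1) * u t (i + 1)
            + (u t 0) ^ i * (u t 1) ^ (K - i) * w (i + 1)) = F (i + 1) - F i := by
    intro i hi
    have hi' : i < K + 1 := Finset.mem_range.mp hi
    obtain ⟨d, rfl⟩ : ∃ d, K = i + d := ⟨K - i, by omega⟩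
    rw [h0, hs i hi', hs 0 (by omega)]
    simp only [hF]
    rw [show i + d + 1 - (i + 1) = d by omega, show i + d + 1 - i = d + 1 by omega,
      show i + d - i = d by omega, show i + d - (i + 1) = d - 1 by omega, Nat.factorial_succ]
    have hd : (Nat.factorial d : ℝ) ≠ 0 := by positivity
    have hd1 : (d : ℝ) + 1 ≠ 0 := by positivity
    push_cast
    field_simp
    ring
  rw [Finset.sum_congr rfl hsum, Finset.sum_range_sub, hs 0 (by omega)]
  simp only [hF]
  simp
  ring

lemma hasDerivAt_xi_scale (K : ℕ) (u : ℝ → ℕ → ℝ) (w : ℕ → ℝ) (t a b : ℝ)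
    (hu : ∀ i, HasDerivAt (fun s => u s i) (w i) t)
    (hs : ∀ i, i < K + 2 → w i = (a - b * i) * u t i) :
    HasDerivAt (fun s => xiFun (K + 2) (u s))
      (((K : ℝ) + 1) * (a - b) * xiFun (K + 2) (u t)) t := by
  refine (hasDerivAt_xi K u w t hu).congr_deriv ?_
  rw [xiFun_add_two, mul_add, Finset.mul_sum]
  congr 1
  · rw [hs 1 (by omega)]
    push_cast
    ring
  · refine Finset.sum_congr rfl fun i hi => ?_
    have hi' : i < K + 1 := Finset.mem_range.mp hi
    obtain ⟨d, rfl⟩ : ∃ d, K = i + d := ⟨K - i, by omega⟩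
    rw [hs 0 (by omega), hs 1 (by omega), hs (i + 1) (by omega), show i + d - i = d by omega]
    have pow_aux : ∀ (m : ℕ) (y : ℝ), (m : ℝ) * y ^ (m - 1) * y = m * y ^ m := by
      intro m y
      cases m with
      | zero => simp
      | succ m => simp [pow_succ, mul_assoc]
    have e0 := pow_aux i (u t 0)
    have e1 := pow_aux d (u t 1)
    push_cast
    linear_combination
      (-1 : ℝ) ^ d / (Nat.factorial d : ℝ) * a * u t 1 ^ d * u t (i + 1) * e0
      + (-1 : ℝ) ^ d / (Nat.factorial d : ℝ) * (a - b) * u t 0 ^ i * u t (i + 1) * e1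

lemma extFun_line {N : ℕ} (x v : Fin N → ℝ) (s : ℝ) (i : ℕ) :
    extFun (x + s • v) i = extFun x i + s * extFun v i := by
  unfold extFun
  split_ifs <;> simp

lemma differentiable_xi {N : ℕ} (k : ℕ) :
    Differentiable ℝ (fun y : Fin N → ℝ => xiFun k (extFun y)) := by
  have hext : ∀ i, Differentiable ℝ (fun y : Fin N → ℝ => extFun y i) := by
    intro i
    unfold extFun
    split_ifs <;> fun_prop
  unfold xiFun
  fun_prop

/-- If the derivatives of `ξ_k` and `ξ₃` in the direction `v` are `(k - 1) c ξ_k` and `2 c ξ₃`, then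
the derivative of `G_k` in the direction `v` vanishes. -/
lemma fderiv_G_eq_zero (n k : ℕ) (hk : 4 ≤ k) (x v : Fin (n - 1) → ℝ)
    (hx : xiFun 3 (extFun x) ≠ 0) (c : ℝ)
    (h1 : HasDerivAt (fun s : ℝ => xiFun k (extFun (x + s • v)))
      (((k : ℝ) - 1) * c * xiFun k (extFun x)) 0)
    (h2 : HasDerivAt (fun s : ℝ => xiFun 3 (extFun (x + s • v)))
      (2 * c * xiFun 3 (extFun x)) 0) :
    fderiv ℝ (Gfun n k) x v = 0 := by
  have hG : DifferentiableAt ℝ (Gfun n k) x := by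
    unfold Gfun
    simp only [div_eq_mul_inv]
    exact ((differentiable_xi k x).fun_pow 2).fun_mul
      (((differentiable_xi 3 x).fun_pow (k - 1)).fun_inv (pow_ne_zero (k - 1) hx))
  have hq := (h1.fun_pow 2).fun_div (h2.fun_pow (k - 1)) (by simpa using pow_ne_zero _ hx)
  have hline : HasDerivAt (fun s : ℝ => Gfun n k (x + s • v)) (fderiv ℝ (Gfun n k) x v) 0 :=
    hG.hasFDerivAt.hasLineDerivAt v
  rw [hline.unique hq]
  obtain ⟨m, rfl⟩ : ∃ m, k = m + 2 := ⟨k - 2, by omega⟩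
  simp only [zero_smul, add_zero, show m + 2 - 1 = m + 1 by omega, Nat.add_sub_cancel]
  rw [div_eq_zero_iff]
  left
  push_cast
  ring

lemma hasDerivAt_extFun_line {N : ℕ} (x v : Fin N → ℝ) (i : ℕ) :
    HasDerivAt (fun s : ℝ => extFun (x + s • v) i) (extFun v i) 0 := by
  simp only [extFun_line]
  simpa using ((hasDerivAt_id (0 : ℝ)).mul_const (extFun v i)).const_add (extFun x i)

lemma fderiv_G_scale (n k : ℕ) (hk : 4 ≤ k) (hkn : k ≤ n - 1)
    (x : Fin (n - 1) → ℝ) (hx : xiFun 3 (extFun x) ≠ 0) (a b : ℝ) :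
    ∑ j : Fin (n - 1), (a - b * (j : ℕ)) * x j * fderiv ℝ (Gfun n k) x (Pi.single j 1) = 0 := by
  set v : Fin (n - 1) → ℝ := fun j => (a - b * (j : ℕ)) * x j with hv
  have hsum : v = ∑ j, v j • (Pi.single j 1 : Fin (n - 1) → ℝ) := by
    ext i
    simp [Finset.sum_apply, Pi.single_apply]
  have hw : ∀ i, i < n - 1 → extFun v i = (a - b * i) * extFun (x + (0 : ℝ) • v) i := by
    intro i hi
    simp [extFun, hi, hv]
  have key : fderiv ℝ (Gfun n k) x v = 0 := by
    refine fderiv_G_eq_zero n k hk x v hx (a - b) ?_ ?_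
    · obtain ⟨m, rfl⟩ : ∃ m, k = m + 2 := ⟨k - 2, by omega⟩
      refine (hasDerivAt_xi_scale m _ _ 0 a b (hasDerivAt_extFun_line x v)
        fun i hi => hw i (by omega)).congr_deriv ?_
      rw [zero_smul, add_zero]
      push_cast
      ring
    · refine (hasDerivAt_xi_scale 1 _ _ 0 a b (hasDerivAt_extFun_line x v)
        fun i hi => hw i (by omega)).congr_deriv ?_
      rw [zero_smul, add_zero]
      push_cast
      ring
  rw [hsum, map_sum] at key
  simpa only [map_smul, smul_eq_mul] using key

/-- Let `n ≥ 6` and `4 ≤ k ≤ n−1`. On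
`{x ∈ ℝ^{n−1} : ξ₃(x₁,x₂,x₃) ≠ 0}` the function `G_k = ξ_k²/ξ₃^{k−1}` satisfies
(i) `Σ_{m=2}^{n−1} x_{m−1} ∂G_k/∂x_m = 0`;
(ii) `Σ_{j=1}^{n−1} x_j ∂G_k/∂x_j = 0`;
(iii) `Σ_{j=1}^{n−1} (n−j−1) x_j ∂G_k/∂x_j = 0`.
Coordinates of `ℝ^{n−1}` are coded `0`-based: `x_m` has index `m − 1`. -/
theorem invariants_of_s4 (n k : ℕ) (hn : 6 ≤ n) (hk : 4 ≤ k) (hkn : k ≤ n - 1)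
    (x : Fin (n - 1) → ℝ) (hx : xiFun 3 (extFun x) ≠ 0) :
    (∑ m : Fin (n - 2),
        x ⟨m.val, by have := m.isLt; omega⟩ *
          fderiv ℝ (Gfun n k) x
            (Pi.single ⟨m.val + 1, by have := m.isLt; omega⟩ 1) = 0) ∧
    (∑ j : Fin (n - 1),
        x j * fderiv ℝ (Gfun n k) x (Pi.single j 1) = 0) ∧
    (∑ j : Fin (n - 1),
        ((n : ℝ) - ((j : ℕ) + 1) - 1) * x j *
          fderiv ℝ (Gfun n k) x (Pi.single j 1) = 0) := by
  refine ⟨?_, ?_, ?_⟩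
  · set v : Fin (n - 1) → ℝ := ∑ m : Fin (n - 2), x ⟨m.val, by have := m.isLt; omega⟩ •
      (Pi.single ⟨m.val + 1, by have := m.isLt; omega⟩ 1 : Fin (n - 1) → ℝ) with hv
    have h0 : extFun v 0 = 0 := by
      simp [extFun, hv, Finset.sum_apply]
    have hs : ∀ i, i + 1 < n - 1 → extFun v (i + 1) = extFun (x + (0 : ℝ) • v) i := by
      intro i hi
      have hi' : i < n - 1 := by omega
      rw [zero_smul, add_zero]
      simp only [extFun, hi, hi', dif_pos, hv, Finset.sum_apply, Pi.smul_apply, Pi.single_apply,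
        smul_eq_mul, Fin.mk.injEq, add_left_inj]
      rw [Finset.sum_eq_single (⟨i, by omega⟩ : Fin (n - 2))]
      · simp
      · intro m _ hm
        have : i ≠ m.val := fun h => hm (Fin.ext h.symm)
        simp [this]
      · simp
    have key : fderiv ℝ (Gfun n k) x v = 0 := by
      refine fderiv_G_eq_zero n k hk x v hx 0 ?_ ?_
      · obtain ⟨m, rfl⟩ : ∃ m, k = m + 2 := ⟨k - 2, by omega⟩
        simpa using hasDerivAt_xi_shift m _ _ 0 (hasDerivAt_extFun_line x v) h0
          fun i hi => hs i (by omega)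
      · simpa using hasDerivAt_xi_shift 1 _ _ 0 (hasDerivAt_extFun_line x v) h0
          fun i hi => hs i (by omega)
    rw [hv, map_sum] at key
    simpa only [map_smul, smul_eq_mul] using key
  · simpa using fderiv_G_scale n k hk hkn x hx 1 0
  · rw [← fderiv_G_scale n k hk hkn x hx ((n : ℝ) - 2) 1]
    refine Finset.sum_congr rfl fun j _ => ?_
    ring
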